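/- Let V ∈ ℝ[x₁,…,x_n] be a polynomial satisfying V(x) ≥ ε(xᵀx)^α for all x ∈ ℝⁿ (for some ε > 0 and positive integer α) and V(0) = 0, and let ρ > 0, κ_V > 0. Then the CLF condition — for every x with V(x) < ρ and x ≠ 0 there exists u ∈ 𝒰 with V̇(x,u) < −κ_V V(x) — holds if and only if there exist a natural number k and polynomials q, r in preorder(V̇(x,u¹)+κ_V V, …, V̇(x,uᵐ)+κ_V V) such that q(x)·(V(x)−ρ)·(xᵀx) = ((V(x)−ρ)·(xᵀx))^{2k} + r(x) as polynomials. -/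

import Mathlib

open MvPolynomial Finset

/-- A polynomial is a sum of squares. -/
def IsSOS {n : ℕ} (p : MvPolynomial (Fin n) ℝ) : Prop :=
  ∃ (N : ℕ) (q : Fin N → MvPolynomial (Fin n) ℝ), p = ∑ i, (q i) ^ 2

/-- Membership in the preorder generated by `b₁, …, bₘ`. -/
def InPreorder {n m : ℕ} (b : Fin m → MvPolynomial (Fin n) ℝ)
    (p : MvPolynomial (Fin n) ℝ) : Prop :=
  ∃ σ : Finset (Fin m) → MvPolynomial (Fin n) ℝ,
    (∀ J, IsSOS (σ J)) ∧ p = ∑ J : Finset (Fin m), σ J * ∏ i ∈ J, b i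

/-- `V̇(x,u) = ∇V(x)ᵀ(f(x) + g(x)u)` as a polynomial in `x`, for a fixed input vector `u`. -/
noncomputable def VdotPoly {n nu : ℕ} (V : MvPolynomial (Fin n) ℝ)
    (f : Fin n → MvPolynomial (Fin n) ℝ) (g : Fin n → Fin nu → MvPolynomial (Fin n) ℝ)
    (u : Fin nu → ℝ) : MvPolynomial (Fin n) ℝ :=
  ∑ i, pderiv i V * (f i + ∑ j, C (u j) * g i j)

/-- `V̇(x,u)` evaluated at the state `x`. -/
noncomputable def VdotFun {n nu : ℕ} (V : MvPolynomial (Fin n) ℝ)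
    (f : Fin n → MvPolynomial (Fin n) ℝ) (g : Fin n → Fin nu → MvPolynomial (Fin n) ℝ)
    (x : Fin n → ℝ) (u : Fin nu → ℝ) : ℝ :=
  eval x (VdotPoly V f g u)

namespace Polynomial

section IntermediateValue

/-- Polynomials over the ordered field `K` satisfy the intermediate value property. -/
def HasIVT (K : Type*) [Field K] [LinearOrder K] : Prop :=
  ∀ (f : K[X]) (a b : K), a < b → f.eval a * f.eval b < 0 → ∃ c, a < c ∧ c < b ∧ f.eval c = 0

variable {K : Type*} [Field K] [LinearOrder K] [IsStrictOrderedRing K]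

theorem hasIVT_real : HasIVT ℝ := by
  intro f a b hab h
  have hc : ContinuousOn (fun x => f.eval x) (Set.Icc a b) := f.continuous.continuousOn
  rcases mul_neg_iff.1 h with ⟨h1, h2⟩ | ⟨h1, h2⟩
  · obtain ⟨c, hc, hc'⟩ := intermediate_value_Ioo' hab.le hc ⟨h2, h1⟩
    exact ⟨c, hc.1, hc.2, hc'⟩
  · obtain ⟨c, hmem, hroot⟩ := intermediate_value_Ioo hab.le hc ⟨h1, h2⟩
    exact ⟨c, hmem.1, hmem.2, hroot⟩

/-- A polynomial without roots between two points has the same strict sign at both. -/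
theorem HasIVT.mul_pos_of_no_root (hK : HasIVT K) (f : K[X]) {a b : K} (hab : a ≤ b)
    (h : ∀ c, a ≤ c → c ≤ b → f.eval c ≠ 0) : 0 < f.eval a * f.eval b := by
  rcases hab.eq_or_lt with rfl | hab
  · exact mul_self_pos.2 (h a le_rfl le_rfl)
  · by_contra hn
    have hne : f.eval a * f.eval b ≠ 0 :=
      mul_ne_zero (h a le_rfl hab.le) (h b hab.le le_rfl)
    obtain ⟨c, h1, h2, h3⟩ := hK f a b hab (lt_of_le_of_ne (not_lt.1 hn) hne)
    exact h c h1.le h2.le h3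

/-- Rolle's theorem for two consecutive roots. -/
theorem HasIVT.rolle_of_consecutive (hK : HasIVT K) {f : K[X]} (hf : f ≠ 0) {a b : K}
    (hab : a < b) (ha : f.eval a = 0) (hb : f.eval b = 0)
    (hno : ∀ c, a < c → c < b → f.eval c ≠ 0) :
    ∃ c, a < c ∧ c < b ∧ (derivative f).eval c = 0 := by
  obtain ⟨g, hg, hga⟩ := exists_eq_pow_rootMultiplicity_mul_and_not_dvd f hf a
  have hma : f.rootMultiplicity a ≠ 0 := by
    rw [← Nat.pos_iff_ne_zero, rootMultiplicity_pos hf]; exact ha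
  obtain ⟨m, hm⟩ := Nat.exists_eq_succ_of_ne_zero hma
  rw [hm] at hg
  have hba : b - a ≠ 0 := (sub_pos.2 hab).ne'
  have hg0 : g ≠ 0 := by rintro rfl; simp at hga
  have hgb : g.eval b = 0 := by
    have := hb
    rw [hg] at this
    simpa [hba] using this
  obtain ⟨k, hk, hkb⟩ := exists_eq_pow_rootMultiplicity_mul_and_not_dvd g hg0 b
  have hmb : g.rootMultiplicity b ≠ 0 := by
    rw [← Nat.pos_iff_ne_zero, rootMultiplicity_pos hg0]; exact hgb
  obtain ⟨n, hn⟩ := Nat.exists_eq_succ_of_ne_zero hmb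
  rw [hn] at hk
  have hka : k.eval a ≠ 0 := by
    intro h
    apply hga
    rw [dvd_iff_isRoot, IsRoot.def, hk]
    simp [h]
  have hkb' : k.eval b ≠ 0 := fun h => hkb (dvd_iff_isRoot.2 h)
  have hkpos : 0 < k.eval a * k.eval b := by
    refine hK.mul_pos_of_no_root k hab.le fun c h1 h2 h3 => ?_
    rcases h1.eq_or_lt with rfl | h1
    · exact hka h3
    rcases h2.eq_or_lt with rfl | h2
    · exact hkb' h3
    refine hno c h1 h2 ?_
    rw [hg, hk]; simp [h3]
  set h : K[X] := C ((m : K) + 1) * (X - C b) * k + C ((n : K) + 1) * (X - C a) * k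
    + (X - C a) * (X - C b) * derivative k with hh
  have hder : derivative f = (X - C a) ^ m * (X - C b) ^ n * h := by
    rw [hg, hk, hh]
    simp only [derivative_mul, derivative_X_sub_C_pow, Nat.succ_eq_add_one, Nat.add_sub_cancel]
    push_cast
    simp only [map_add, map_natCast, map_one]
    ring
  have hsign : h.eval a * h.eval b < 0 := by
    have h1 : h.eval a = (m + 1) * (a - b) * k.eval a := by simp [hh]
    have h2 : h.eval b = (n + 1) * (b - a) * k.eval b := by simp [hh]
    have : h.eval a * h.eval b
        = -(((m : K) + 1) * (n + 1) * (b - a) ^ 2 * (k.eval a * k.eval b)) := by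
      rw [h1, h2]; ring
    rw [this, neg_lt_zero]
    have := sub_pos.2 hab
    positivity
  obtain ⟨c, h1, h2, h3⟩ := hK h a b hab hsign
  exact ⟨c, h1, h2, by rw [hder]; simp [h3]⟩

/-- Rolle's theorem for polynomials. -/
theorem HasIVT.rolle (hK : HasIVT K) {f : K[X]} (hf : f ≠ 0) {a b : K}
    (hab : a < b) (ha : f.eval a = 0) (hb : f.eval b = 0) :
    ∃ c, a < c ∧ c < b ∧ (derivative f).eval c = 0 := by
  classical
  set s := f.roots.toFinset.filter (fun c => a < c) with hs
  have hbs : b ∈ s := by simp [hs, hf, hb, hab]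
  have hmin := s.min'_mem ⟨b, hbs⟩
  have hle := s.min'_le b hbs
  set b' := s.min' ⟨b, hbs⟩ with hb'
  simp only [hs, Finset.mem_filter, Multiset.mem_toFinset, mem_roots hf, IsRoot.def] at hmin
  obtain ⟨c, h1, h2, h3⟩ := hK.rolle_of_consecutive hf hmin.2 ha hmin.1 fun c h1 h2 h3 => by
    have : c ∈ s := by simp [hs, hf, h3, h1]
    exact absurd (s.min'_le c this) (not_le.2 h2)
  exact ⟨c, h1, h2.trans_le hle, h3⟩

end IntermediateValue

section SignTransfer

variable {G K L : Type*} [Field G] [LinearOrder G] [IsStrictOrderedRing G]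
  [Field K] [LinearOrder K] [IsStrictOrderedRing K]
  [Field L] [LinearOrder L] [IsStrictOrderedRing L]

theorem sign_map_of_strictMono {i : G →+* K} (hi : StrictMono i) (c : G) :
    SignType.sign (i c) = SignType.sign c := by
  rcases lt_trichotomy c 0 with h | rfl | h
  · have := hi h
    rw [map_zero] at this
    rw [sign_neg h, sign_neg this]
  · simp
  · have := hi h
    rw [map_zero] at this
    rw [sign_pos h, sign_pos this]

theorem sign_eq_of_mul_pos {a b : K} (h : 0 < a * b) : SignType.sign a = SignType.sign b := by
  rcases pos_and_pos_or_neg_and_neg_of_mul_pos h with ⟨h1, h2⟩ | ⟨h1, h2⟩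
  · rw [sign_pos h1, sign_pos h2]
  · rw [sign_neg h1, sign_neg h2]

/-- The sign of `g` at a point outside the ground field is its sign at any ground point lying in
the same gap between the roots of `g`. -/
theorem HasIVT.sign_eval₂_eq (hK : HasIVT K) {i : G →+* K} (hi : StrictMono i) {α : K}
    {g : G[X]} {m : G}
    (hroot : ∀ c, eval₂ i c g = 0 → c ∈ i.range) (hα : α ∉ i.range)
    (hlo : ∀ z, eval z g = 0 → i z < α → z < m) (hhi : ∀ z, eval z g = 0 → α < i z → m < z) :
    SignType.sign (eval₂ i α g) = SignType.sign (eval m g) := by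
  have key : ∀ c, eval₂ i c g = 0 → c ≠ α ∧ (c < α ↔ c < i m) ∧ c ≠ i m := by
    intro c hc
    obtain ⟨z, rfl⟩ := hroot c hc
    have hz : eval z g = 0 := by
      rw [eval₂_hom] at hc; exact (map_eq_zero i).1 hc
    have hne : i z ≠ α := fun h => hα ⟨z, h⟩
    rcases lt_or_gt_of_ne hne with h | h
    · exact ⟨hne, ⟨fun _ => hi (hlo z hz h), fun _ => h⟩, (hi (hlo z hz h)).ne⟩
    · have := hi (hhi z hz h)
      exact ⟨hne, ⟨fun h' => absurd h h'.not_gt, fun h' => absurd this h'.not_gt⟩, this.ne'⟩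
  rw [← sign_map_of_strictMono hi (eval m g), ← eval₂_hom]
  simp only [← eval_map] at key ⊢
  rcases le_total α (i m) with h | h
  · refine sign_eq_of_mul_pos (hK.mul_pos_of_no_root _ h fun c h1 h2 h3 => ?_)
    obtain ⟨k1, k2, k3⟩ := key c h3
    exact absurd (k2.2 (lt_of_le_of_ne h2 k3)) h1.not_gt
  · refine (sign_eq_of_mul_pos (hK.mul_pos_of_no_root _ h fun c h1 h2 h3 => ?_)).symm
    obtain ⟨k1, k2, k3⟩ := key c h3
    exact absurd (k2.1 (lt_of_le_of_ne h2 k1)) h1.not_gt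

/-- Two points realising the same cut of `G` give the same sign to every polynomial whose roots
all lie in `G`. -/
theorem sign_eval₂_eq_of_same_cut (hK : HasIVT K) (hL : HasIVT L)
    {i : G →+* K} (hi : StrictMono i) {j : G →+* L} (hj : StrictMono j) {α : K} {β : L}
    (hα : α ∉ i.range) (hβ : β ∉ j.range) (hcut : ∀ c, i c < α ↔ j c < β)
    {g : G[X]} (hg : g ≠ 0) (hrK : ∀ c, eval₂ i c g = 0 → c ∈ i.range)
    (hrL : ∀ c, eval₂ j c g = 0 → c ∈ j.range) :
    SignType.sign (eval₂ i α g) = SignType.sign (eval₂ j β g) := by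
  classical
  obtain ⟨m, hlo, hhi⟩ := Order.exists_between_finsets
    (g.roots.toFinset.filter (fun z => i z < α)) (g.roots.toFinset.filter (fun z => α < i z))
    (fun x hx y hy => hi.lt_iff_lt.1
      ((Finset.mem_filter.1 hx).2.trans (Finset.mem_filter.1 hy).2))
  simp only [Finset.mem_filter, Multiset.mem_toFinset, mem_roots hg, IsRoot.def] at hlo hhi
  rw [hK.sign_eval₂_eq hi hrK hα (fun z h1 h2 => hlo z ⟨h1, h2⟩) (fun z h1 h2 => hhi z ⟨h1, h2⟩),
    hL.sign_eval₂_eq hj hrL hβ (fun z h1 h2 => hlo z ⟨h1, (hcut z).2 h2⟩)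
      (fun z h1 h2 => hhi z ⟨h1, ?_⟩)]
  have h3 : i z ≠ α := fun h => hα ⟨z, h⟩
  exact lt_of_le_of_ne (not_lt.1 fun h => h2.not_gt ((hcut z).1 h)) h3.symm

/-- On an interval without critical points, a polynomial with a root changes sign exactly there. -/
theorem HasIVT.sign_change (hK : HasIVT K) {F : K[X]} (hF : F ≠ 0) {a b α : K}
    (haα : a < α) (hαb : α < b) (hα : F.eval α = 0)
    (hcrit : ∀ c, a < c → c < b → (derivative F).eval c ≠ 0) {c : K} (hac : a ≤ c) (hcb : c ≤ b) :
    (0 < F.eval a * F.eval c ↔ c < α) ∧ (F.eval a * F.eval c < 0 ↔ α < c) := by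
  obtain ⟨h, rfl⟩ := dvd_iff_isRoot.2 hα
  have hno : ∀ γ, a ≤ γ → γ ≤ b → h.eval γ ≠ 0 := by
    intro γ h1 h2 h3
    rcases lt_trichotomy γ α with h4 | rfl | h4
    · obtain ⟨δ, h5, h6, h7⟩ := hK.rolle hF h4 (by simp [h3]) hα
      exact hcrit δ (h1.trans_lt h5) (h6.trans hαb) h7
    · exact hcrit γ haα hαb (by simp [derivative_mul, h3])
    · obtain ⟨δ, h5, h6, h7⟩ := hK.rolle hF h4 hα (by simp [h3])
      exact hcrit δ (haα.trans h5) (h6.trans_le h2) h7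
  have hpos := hK.mul_pos_of_no_root h hac fun γ h1 h2 => hno γ h1 (h2.trans hcb)
  have heq : eval a ((X - C α) * h) * eval c ((X - C α) * h)
      = (α - a) * (h.eval a * h.eval c) * (α - c) := by
    simp only [eval_mul, eval_sub, eval_X, eval_C]; ring
  have hp : 0 < (α - a) * (h.eval a * h.eval c) := mul_pos (sub_pos.2 haα) hpos
  rw [heq]
  constructor
  · rw [mul_pos_iff_of_pos_left hp, sub_pos]
  · rw [← neg_pos, ← mul_neg, mul_pos_iff_of_pos_left hp, neg_sub, sub_pos]

/-- A bound in the ground field for the roots of a monic polynomial in any ordered extension. -/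
theorem Monic.exists_root_bound {f : G[X]} (hf : f.Monic) :
    ∃ M : G, ∀ {i : G →+* K}, StrictMono i → ∀ y, eval₂ i y f = 0 → |y| < i M := by
  refine ⟨1 + ∑ k ∈ range f.natDegree, |f.coeff k|, fun {i} hi y hy => ?_⟩
  by_contra hlt
  rw [not_lt] at hlt
  have habs : ∀ c, i |c| = |i c| := fun c => by
    rcases le_total 0 c with h | h
    · rw [abs_of_nonneg h, abs_of_nonneg]; simpa using hi.monotone h
    · rw [abs_of_nonpos h, abs_of_nonpos, map_neg]; simpa using hi.monotone h
  simp only [map_add, map_one, map_sum, habs] at hlt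
  have hsum : 0 ≤ ∑ k ∈ range f.natDegree, |i (f.coeff k)| := sum_nonneg fun _ _ => abs_nonneg _
  have hy1 : 1 ≤ |y| := by linarith
  rw [hf.as_sum, eval₂_add, eval₂_X_pow, eval₂_finsetSum] at hy
  simp only [eval₂_mul, eval₂_C, eval₂_X_pow] at hy
  rcases Nat.eq_zero_or_pos f.natDegree with h0 | h0
  · rw [h0] at hy; simp at hy
  have h1 : |y| ^ f.natDegree ≤ (∑ k ∈ range f.natDegree, |i (f.coeff k)|)
      * |y| ^ (f.natDegree - 1) := by
    rw [← abs_pow, eq_neg_of_add_eq_zero_left hy, abs_neg, sum_mul]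
    refine (abs_sum_le_sum_abs _ _).trans (sum_le_sum fun k hk => ?_)
    rw [abs_mul, abs_pow]
    have := Finset.mem_range.1 hk
    gcongr
    omega
  have h2 : |y| ^ f.natDegree = |y| * |y| ^ (f.natDegree - 1) := by
    rw [← pow_succ', Nat.sub_add_cancel h0]
  rw [h2] at h1
  have := le_of_mul_le_mul_right h1 (by positivity)
  linarith

/-- A root of `f` in `K` outside `G` has a counterpart in `L` with the same sign type over `G`,
provided polynomials over `G` of smaller degree acquire no roots in `K` or `L`. -/
theorem exists_root_same_sign (hK : HasIVT K) (hL : HasIVT L)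
    {i : G →+* K} (hi : StrictMono i) {j : G →+* L} (hj : StrictMono j) {f : G[X]} (hf : f.Monic)
    (hrK : ∀ g : G[X], g ≠ 0 → g.natDegree < f.natDegree → ∀ c, eval₂ i c g = 0 → c ∈ i.range)
    (hrL : ∀ g : G[X], g ≠ 0 → g.natDegree < f.natDegree → ∀ c, eval₂ j c g = 0 → c ∈ j.range)
    {α : K} (hα : eval₂ i α f = 0) (hαi : α ∉ i.range) :
    ∃ β : L, β ∉ j.range ∧
      ∀ g : G[X], SignType.sign (eval₂ i α g) = SignType.sign (eval₂ j β g) := by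
  classical
  have hd : 0 < f.natDegree := by
    by_contra h
    rw [hf.natDegree_eq_zero.1 (by omega)] at hα
    simp at hα
  have hf' : derivative f ≠ 0 := by
    intro h; have := derivative_eq_zero.1 h; omega
  have hdf' : (derivative f).natDegree < f.natDegree := natDegree_derivative_lt (by omega)
  obtain ⟨M, hM⟩ := hf.exists_root_bound (K := K)
  have hMα := abs_lt.1 (hM hi α hα)
  have hne : ∀ z, i z ≠ α := fun z h => hαi ⟨z, h⟩
  set lo := insert (-M) ((derivative f).roots.toFinset.filter (fun z => i z < α)) with hlo
  set up := insert M ((derivative f).roots.toFinset.filter (fun z => α < i z)) with hup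
  obtain ⟨a, haα, ha⟩ : ∃ a, i a < α ∧ ∀ z, eval z (derivative f) = 0 → i z < α → z ≤ a := by
    have hmem := lo.max'_mem ⟨-M, by simp [hlo]⟩
    refine ⟨lo.max' ⟨-M, by simp [hlo]⟩, ?_,
      fun z h1 h2 => lo.le_max' _ (by simp [hlo, hf', h1, h2])⟩
    rcases Finset.mem_insert.1 hmem with h | h
    · rw [h, map_neg]; exact hMα.1
    · exact (Finset.mem_filter.1 h).2
  obtain ⟨b, hαb, hb⟩ : ∃ b, α < i b ∧ ∀ z, eval z (derivative f) = 0 → α < i z → b ≤ z := by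
    have hmem := up.min'_mem ⟨M, by simp [hup]⟩
    refine ⟨up.min' ⟨M, by simp [hup]⟩, ?_,
      fun z h1 h2 => up.min'_le _ (by simp [hup, hf', h1, h2])⟩
    rcases Finset.mem_insert.1 hmem with h | h
    · rw [h]; exact hMα.2
    · exact (Finset.mem_filter.1 h).2
  have hab : a < b := hi.lt_iff_lt.1 (haα.trans hαb)
  have hcritG : ∀ z, a < z → z < b → eval z (derivative f) ≠ 0 := fun z h1 h2 h3 => by
    rcases lt_or_gt_of_ne (hne z) with h | h
    · exact absurd (ha z h3 h) (not_le.2 h1)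
    · exact absurd (hb z h3 h) (not_le.2 h2)
  have hcritK : ∀ c, i a < c → c < i b → (derivative (f.map i)).eval c ≠ 0 := by
    intro c h1 h2 h3
    rw [derivative_map, eval_map] at h3
    obtain ⟨z, rfl⟩ := hrK _ hf' hdf' c h3
    rw [eval₂_hom, map_eq_zero] at h3
    exact hcritG z (hi.lt_iff_lt.1 h1) (hi.lt_iff_lt.1 h2) h3
  have hcritL : ∀ c, j a < c → c < j b → (derivative (f.map j)).eval c ≠ 0 := by
    intro c h1 h2 h3
    rw [derivative_map, eval_map] at h3
    obtain ⟨z, rfl⟩ := hrL _ hf' hdf' c h3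
    rw [eval₂_hom, map_eq_zero] at h3
    exact hcritG z (hj.lt_iff_lt.1 h1) (hj.lt_iff_lt.1 h2) h3
  have hevK : ∀ z, eval (i z) (f.map i) = i (eval z f) := fun z => by rw [eval_map, eval₂_hom]
  have hevL : ∀ z, eval (j z) (f.map j) = j (eval z f) := fun z => by rw [eval_map, eval₂_hom]
  have hsK : ∀ z, a ≤ z → z ≤ b →
      (0 < eval a f * eval z f ↔ i z < α) ∧ (eval a f * eval z f < 0 ↔ α < i z) := by
    intro z h1 h2
    have := hK.sign_change (hf.map i).ne_zero haα hαb (by rwa [eval_map]) hcritK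
      (hi.monotone h1) (hi.monotone h2)
    rwa [hevK, hevK, ← map_mul, ← map_zero i, hi.lt_iff_lt, hi.lt_iff_lt] at this
  have hneg : eval (j a) (f.map j) * eval (j b) (f.map j) < 0 := by
    rw [hevL, hevL, ← map_mul, ← map_zero j, hj.lt_iff_lt]
    exact (hsK b hab.le le_rfl).2.2 hαb
  obtain ⟨β, haβ, hβb, hβ⟩ := hL _ _ _ (hj hab) hneg
  have hsL : ∀ z, a ≤ z → z ≤ b →
      (0 < eval a f * eval z f ↔ j z < β) ∧ (eval a f * eval z f < 0 ↔ β < j z) := by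
    intro z h1 h2
    have := hL.sign_change (hf.map j).ne_zero haβ hβb hβ hcritL
      (hj.monotone h1) (hj.monotone h2)
    rwa [hevL, hevL, ← map_mul, ← map_zero j, hj.lt_iff_lt, hj.lt_iff_lt] at this
  have hβj : β ∉ j.range := by
    rintro ⟨z, rfl⟩
    have h1 := (hj.lt_iff_lt.1 haβ).le
    have h2 := (hj.lt_iff_lt.1 hβb).le
    rw [hevL, map_eq_zero] at hβ
    have := hsK z h1 h2
    rw [hβ, mul_zero] at this
    simp only [lt_self_iff_false, false_iff, not_lt] at this
    exact hne z (le_antisymm this.2 this.1)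
  have hcut : ∀ z, i z < α ↔ j z < β := by
    intro z
    rcases lt_or_ge z a with h | h
    · exact ⟨fun _ => (hj h).trans haβ, fun _ => (hi h).trans haα⟩
    rcases lt_or_ge b z with h' | h'
    · exact ⟨fun h2 => absurd (hαb.trans (hi h')) h2.not_gt,
        fun h2 => absurd (hβb.trans (hj h')) h2.not_gt⟩
    · rw [← (hsK z h h').1, (hsL z h h').1]
  refine ⟨β, hβj, fun g => ?_⟩
  have hgK : eval₂ i α g = eval₂ i α (g %ₘ f) := by
    conv_lhs => rw [← modByMonic_add_div g f]
    simp [eval₂_add, eval₂_mul, hα]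
  have hgL : eval₂ j β g = eval₂ j β (g %ₘ f) := by
    rw [eval_map] at hβ
    conv_lhs => rw [← modByMonic_add_div g f]
    simp [eval₂_add, eval₂_mul, hβ]
  rw [hgK, hgL]
  by_cases hr : g %ₘ f = 0
  · simp [hr]
  · have hlt := natDegree_modByMonic_lt g hf (by rintro rfl; simp at hd)
    exact sign_eval₂_eq_of_same_cut hK hL hi hj hαi hβj hcut hr (hrK _ hr hlt) (hrL _ hr hlt)

/-- If a pair of embeddings of `G` cannot be extended by a pair of elements of the same sign type,
then `G` is relatively algebraically closed on both sides. -/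
theorem root_mem_range_of_maximal (hK : HasIVT K) (hL : HasIVT L)
    {i : G →+* K} (hi : StrictMono i) {j : G →+* L} (hj : StrictMono j)
    (hmax : ∀ α β, (∀ g : G[X], SignType.sign (eval₂ i α g) = SignType.sign (eval₂ j β g)) →
      α ∈ i.range ∧ β ∈ j.range) (f : G[X]) (hf : f ≠ 0) :
    (∀ c, eval₂ i c f = 0 → c ∈ i.range) ∧ (∀ c, eval₂ j c f = 0 → c ∈ j.range) := by
  induction hd : f.natDegree using Nat.strong_induction_on generalizing f with
  | h d ih =>
    have hlc : f.leadingCoeff⁻¹ ≠ 0 := inv_ne_zero (leadingCoeff_ne_zero.2 hf)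
    have hmonic : (f * C f.leadingCoeff⁻¹).Monic := monic_mul_leadingCoeff_inv hf
    have hdeg : (f * C f.leadingCoeff⁻¹).natDegree = d := by
      rw [natDegree_mul_C hlc, hd]
    have ihK := fun (g : G[X]) (hg : g ≠ 0)
        (h : g.natDegree < (f * C f.leadingCoeff⁻¹).natDegree) =>
      (ih _ (hdeg ▸ h) g hg rfl).1
    have ihL := fun (g : G[X]) (hg : g ≠ 0)
        (h : g.natDegree < (f * C f.leadingCoeff⁻¹).natDegree) =>
      (ih _ (hdeg ▸ h) g hg rfl).2
    constructor
    · intro c hc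
      by_contra hci
      obtain ⟨β, -, hs⟩ := exists_root_same_sign hK hL hi hj hmonic ihK ihL
        (by rw [eval₂_mul, hc, zero_mul]) hci
      exact hci (hmax c β hs).1
    · intro c hc
      by_contra hci
      obtain ⟨β, -, hs⟩ := exists_root_same_sign hL hK hj hi hmonic ihL ihK
        (by rw [eval₂_mul, hc, zero_mul]) hci
      exact hci (hmax β c fun g => (hs g).symm).2

/-- A field with the intermediate value property is relatively algebraically closed in every
ordered extension with that property. -/
theorem HasIVT.root_mem_range (hG : HasIVT G) (hK : HasIVT K) {i : G →+* K} (hi : StrictMono i)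
    (f : G[X]) (hf : f ≠ 0) (c : K) (hc : eval₂ i c f = 0) : c ∈ i.range := by
  refine (root_mem_range_of_maximal hK hG hi (j := RingHom.id G) strictMono_id
    (fun α β h => ⟨⟨β, ?_⟩, ⟨β, rfl⟩⟩) f hf).1 c hc
  have := h (X - C β)
  simp only [eval₂_sub, eval₂_X, eval₂_C, RingHom.id_apply, sub_self, sign_zero,
    sign_eq_zero_iff] at this
  exact (sub_eq_zero.1 this).symm

end SignTransfer

section Ultrapower

variable {ι R : Type*} [Field R] (U : Ultrafilter ι)

theorem exists_germ_eval (p : (Filter.Germ (U : Filter ι) R)[X]) :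
    ∃ P : ι → R[X], ∀ a : ι → R,
      eval (a : Filter.Germ (U : Filter ι) R) p = ((fun r => eval (a r) (P r) : ι → R) :) := by
  induction p using Polynomial.induction_on' with
  | add p q hp hq =>
    obtain ⟨P, hP⟩ := hp
    obtain ⟨Q, hQ⟩ := hq
    refine ⟨fun r => P r + Q r, fun a => ?_⟩
    rw [eval_add, hP, hQ, ← Filter.Germ.coe_add]
    simp only [eval_add]
    rfl
  | monomial n c =>
    induction c using Filter.Germ.inductionOn with
    | _ c =>
    refine ⟨fun r => monomial n (c r), fun a => ?_⟩
    rw [eval_monomial, ← Filter.Germ.coe_pow, ← Filter.Germ.coe_mul]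
    simp only [eval_monomial]
    rfl

theorem HasIVT.germ [LinearOrder R] [IsStrictOrderedRing R] (hR : HasIVT R) :
    HasIVT (Filter.Germ (U : Filter ι) R) := by
  intro f a b hab h
  induction a using Filter.Germ.inductionOn with
  | _ a =>
  induction b using Filter.Germ.inductionOn with
  | _ b =>
  obtain ⟨P, hP⟩ := exists_germ_eval U f
  rw [hP, hP, ← Filter.Germ.coe_mul, ← Filter.Germ.coe_zero, Filter.Germ.coe_lt] at h
  rw [Filter.Germ.coe_lt] at hab
  have key : ∀ r, ∃ c, a r < b r → eval (a r) (P r) * eval (b r) (P r) < 0 →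
      a r < c ∧ c < b r ∧ eval c (P r) = 0 := by
    intro r
    by_cases h1 : a r < b r
    · by_cases h2 : eval (a r) (P r) * eval (b r) (P r) < 0
      · obtain ⟨c, hc⟩ := hR _ _ _ h1 h2
        exact ⟨c, fun _ _ => hc⟩
      · exact ⟨0, fun _ h => absurd h h2⟩
    · exact ⟨0, fun h => absurd h h1⟩
  choose c hc using key
  refine ⟨(c : Filter.Germ (U : Filter ι) R), ?_, ?_, ?_⟩
  · rw [Filter.Germ.coe_lt]
    filter_upwards [hab, h] with r h1 h2 using (hc r h1 h2).1
  · rw [Filter.Germ.coe_lt]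
    filter_upwards [hab, h] with r h1 h2 using (hc r h1 h2).2.1
  · rw [hP, ← Filter.Germ.coe_zero, Filter.Germ.coe_eq]
    filter_upwards [hab, h] with r h1 h2 using (hc r h1 h2).2.2

theorem eventually_sign_eq [LinearOrder R] (f : ι → R) :
    ∀ᶠ r in (U : Filter ι),
      SignType.sign (f r) = SignType.sign (f : Filter.Germ (U : Filter ι) R) := by
  rcases lt_trichotomy (f : Filter.Germ (U : Filter ι) R) 0 with h | h | h
  · rw [sign_neg h]
    rw [← Filter.Germ.coe_zero, Filter.Germ.coe_lt] at h
    filter_upwards [h] with r hr using sign_neg hr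
  · rw [h, sign_zero]
    rw [← Filter.Germ.coe_zero, Filter.Germ.coe_eq] at h
    filter_upwards [h] with r hr
    rw [hr]; simp
  · rw [sign_pos h]
    rw [← Filter.Germ.coe_zero, Filter.Germ.coe_lt] at h
    filter_upwards [h] with r hr using sign_pos hr

end Ultrapower

/-- An ultrafilter on `R` concentrated at the cut of a point of an ordered extension. -/
theorem exists_ultrafilter_cut {R K : Type*} [Field R] [LinearOrder R] [IsStrictOrderedRing R]
    [Field K] [LinearOrder K] {i : R →+* K} (hi : StrictMono i) (t : K) :
    ∃ U : Ultrafilter R, (∀ a, i a < t → ∀ᶠ r in (U : Filter R), a < r) ∧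
      (∀ b, t < i b → ∀ᶠ r in (U : Filter R), r < b) := by
  classical
  set A : Finset R → Set R := fun s => {r | ∀ z ∈ s, (i z < t → z < r) ∧ (t < i z → r < z)}
    with hA
  have hne : (⨅ s, Filter.principal (A s)).NeBot := by
    refine Filter.iInf_neBot_of_directed (fun s s' => ⟨s ∪ s', ?_, ?_⟩) fun s => ?_
    · exact Filter.principal_mono.2 fun r hr z hz => hr z (Finset.mem_union_left _ hz)
    · exact Filter.principal_mono.2 fun r hr z hz => hr z (Finset.mem_union_right _ hz)
    · rw [Filter.principal_neBot_iff]
      obtain ⟨m, h1, h2⟩ := Order.exists_between_finsets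
        (s.filter (fun z => i z < t)) (s.filter (fun z => t < i z))
        (fun x hx y hy => hi.lt_iff_lt.1
          ((Finset.mem_filter.1 hx).2.trans (Finset.mem_filter.1 hy).2))
      exact ⟨m, fun z hz => ⟨fun h => h1 z (Finset.mem_filter.2 ⟨hz, h⟩),
        fun h => h2 z (Finset.mem_filter.2 ⟨hz, h⟩)⟩⟩
  have hmem : ∀ z, A {z} ∈ (Ultrafilter.of (⨅ s, Filter.principal (A s)) : Filter R) := fun z =>
    Ultrafilter.of_le _ (Filter.mem_iInf_of_mem {z} (Filter.mem_principal_self _))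
  refine ⟨Ultrafilter.of (⨅ s, Filter.principal (A s)), fun a ha => ?_, fun b hb => ?_⟩
  · filter_upwards [hmem a] with r hr using (hr a (by simp)).1 ha
  · filter_upwards [hmem b] with r hr using (hr b (by simp)).2 hb

section SignPatterns

variable {K : Type} [Field K] [LinearOrder K] [IsStrictOrderedRing K] (ρ : ℝ →+* K)

/-- Every sign pattern of finitely many real polynomials that is realised by a tuple of elements of
`S` is realised by a tuple of real numbers. -/
def SignsRealised (S : Subfield K) : Prop :=
  ∀ (n : ℕ) (y : Fin n → K), (∀ k, y k ∈ S) → ∀ s : Finset (MvPolynomial (Fin n) ℝ),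
    ∃ x : Fin n → ℝ, ∀ p ∈ s,
      SignType.sign (MvPolynomial.eval x p) = SignType.sign (MvPolynomial.eval₂ ρ y p)

variable {ρ}

theorem SignsRealised.of_embedding {S S' : Subfield K} (hS : SignsRealised ρ S)
    (hρ : ∀ r, ρ r ∈ S) (hρ' : ∀ r, ρ r ∈ S') (U : Ultrafilter S)
    (j : S' →+* Filter.Germ (U : Filter S) S) (hj : StrictMono j)
    (hjρ : ∀ r, j ⟨ρ r, hρ' r⟩ = ((fun _ => ⟨ρ r, hρ r⟩ : S → S) :)) : SignsRealised ρ S' := by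
  intro n y hy s
  have hlift : ∀ k, ∃ Y : S → S, j ⟨y k, hy k⟩ = (Y : Filter.Germ (U : Filter S) S) := fun k =>
    Filter.Germ.inductionOn (j ⟨y k, hy k⟩) fun f => ⟨f, rfl⟩
  choose Y hY using hlift
  have hval : ∀ p : MvPolynomial (Fin n) ℝ, SignType.sign (MvPolynomial.eval₂ ρ y p) =
      SignType.sign ((fun r => ⟨MvPolynomial.eval₂ ρ (fun k => (Y k r : K)) p,
        MvPolynomial.eval₂_mem (fun _ _ => hρ _) (fun k => (Y k r).2)⟩ : S → S) :
          Filter.Germ (U : Filter S) S) := by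
    intro p
    set ρ' : ℝ →+* S' := ρ.codRestrict S' hρ' with hρ'def
    set ρS : ℝ →+* S := ρ.codRestrict S hρ with hρSdef
    have h1 : MvPolynomial.eval₂ ρ y p
        = S'.subtype (MvPolynomial.eval₂ ρ' (fun k => ⟨y k, hy k⟩) p) := by
      rw [MvPolynomial.eval₂_comp_left]; rfl
    rw [h1, sign_map_of_strictMono (i := S'.subtype) (fun _ _ h => h), ← sign_map_of_strictMono hj,
      MvPolynomial.eval₂_comp_left]
    congr 1
    have h2 : j.comp ρ' = (Filter.Germ.coeRingHom (U : Filter S)).comp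
        ((Pi.constRingHom S S).comp ρS) := RingHom.ext fun r => hjρ r
    have h3 : (j ∘ fun k => (⟨y k, hy k⟩ : S')) = Filter.Germ.coeRingHom (U : Filter S) ∘ Y :=
      _root_.funext hY
    rw [h2, h3, ← MvPolynomial.eval₂_comp_left]
    change Filter.Germ.ofFun _ = Filter.Germ.ofFun _
    congr 1
    funext r
    apply Subtype.ext
    change S.subtype (Pi.evalRingHom (fun _ : S => S) r (MvPolynomial.eval₂ _ Y p)) = _
    rw [MvPolynomial.eval₂_comp_left, MvPolynomial.eval₂_comp_left]
    rfl
  have hev := (Filter.eventually_all_finset s).2 fun p _ => eventually_sign_eq U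
    (fun r => (⟨MvPolynomial.eval₂ ρ (fun k => (Y k r : K)) p,
        MvPolynomial.eval₂_mem (fun _ _ => hρ _) (fun k => (Y k r).2)⟩ : S))
  obtain ⟨r, hr⟩ := hev.exists
  obtain ⟨x, hx⟩ := hS n (fun k => Y k r) (fun k => (Y k r).2) s
  refine ⟨x, fun p hp => ?_⟩
  rw [hx p hp, hval p, ← hr p hp,
    ← sign_map_of_strictMono (i := S.subtype) (fun _ _ h => h)]
  rfl

end SignPatterns

section Extension

variable {K L : Type} [Field K] [LinearOrder K] [IsStrictOrderedRing K]
  [Field L] [LinearOrder L] [IsStrictOrderedRing L]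

/-- The subrings of `K × L` that are graphs of order isomorphisms. -/
def signSubrings (K L : Type) [Field K] [LinearOrder K] [Field L] [LinearOrder L] :
    Set (Subring (K × L)) :=
  {H | ∀ z ∈ H, SignType.sign z.1 = SignType.sign z.2}

theorem fst_eval₂ {A B B' : Type*} [CommRing A] [CommRing B] [CommRing B'] (φ : A →+* B × B')
    (z : B × B') (g : A[X]) :
    (eval₂ φ z g).1 = eval₂ ((RingHom.fst B B').comp φ) z.1 g :=
  hom_eval₂ g φ (RingHom.fst B B') z

theorem snd_eval₂ {A B B' : Type*} [CommRing A] [CommRing B] [CommRing B'] (φ : A →+* B × B')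
    (z : B × B') (g : A[X]) :
    (eval₂ φ z g).2 = eval₂ ((RingHom.snd B B').comp φ) z.2 g :=
  hom_eval₂ g φ (RingHom.snd B B') z

theorem exists_maximal_signSubring {H₀ : Subring (K × L)} (h₀ : H₀ ∈ signSubrings K L) :
    ∃ H, H₀ ≤ H ∧ Maximal (· ∈ signSubrings K L) H := by
  refine zorn_le_nonempty₀ _ (fun c hc hchain y hy => ⟨sSup c, fun z hz => ?_,
    fun _ hz => le_sSup hz⟩) H₀ h₀
  obtain ⟨H, hH, hzH⟩ := (Subring.mem_sSup_of_directedOn ⟨y, hy⟩ hchain.directedOn).1 hz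
  exact hc hH z hzH

theorem mem_of_maximal_signSubring {H : Subring (K × L)} (hH : Maximal (· ∈ signSubrings K L) H)
    (z : K × L) (hz : ∀ g : H[X], SignType.sign (eval₂ H.subtype z g).1
      = SignType.sign (eval₂ H.subtype z g).2) : z ∈ H := by
  have hle : H ≤ (eval₂RingHom H.subtype z).range := fun w hw => ⟨C ⟨w, hw⟩, by simp⟩
  have hmem : (eval₂RingHom H.subtype z).range ∈ signSubrings K L := by
    rintro _ ⟨g, rfl⟩
    exact hz g
  exact hH.2 hmem hle ⟨X, by simp⟩

theorem inv_mem_of_maximal_signSubring {H : Subring (K × L)}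
    (hH : Maximal (· ∈ signSubrings K L) H) {z : K × L} (hz : z ∈ H) (h1 : z.1 ≠ 0) :
    (z.1⁻¹, z.2⁻¹) ∈ H := by
  have hs := hH.1 z hz
  have h2 : z.2 ≠ 0 := by
    intro h
    rw [h, sign_zero, sign_eq_zero_iff] at hs
    exact h1 hs
  refine mem_of_maximal_signSubring hH _ fun g => ?_
  have key := hH.1 (eval₂ H.subtype z g.reverse)
    (by
      have h := eval₂_hom (p := g.reverse) H.subtype ⟨z, hz⟩
      exact h ▸ Subtype.property _)
  let := invertibleOfNonzero (inv_ne_zero h1)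
  let := invertibleOfNonzero (inv_ne_zero h2)
  rw [fst_eval₂, snd_eval₂] at key ⊢
  have e1 := eval₂_reverse_mul_pow ((RingHom.fst K L).comp H.subtype) z.1⁻¹ g
  have e2 := eval₂_reverse_mul_pow ((RingHom.snd K L).comp H.subtype) z.2⁻¹ g
  rw [invOf_eq_inv, inv_inv] at e1 e2
  have hinv1 : SignType.sign z.1⁻¹ = SignType.sign z.1 :=
    sign_eq_of_mul_pos (by rw [inv_mul_cancel₀ h1]; exact one_pos)
  have hinv2 : SignType.sign z.2⁻¹ = SignType.sign z.2 :=
    sign_eq_of_mul_pos (by rw [inv_mul_cancel₀ h2]; exact one_pos)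
  simp only
  rw [← e1, ← e2, sign_mul, sign_mul, sign_pow, sign_pow, key, hinv1, hinv2, hs]

/-- A maximal subring of `K × L` preserving signs is the graph of an order embedding of a
relatively algebraically closed subfield of `K` into `L`. -/
theorem exists_subfield_of_maximal_signSubring (hK : HasIVT K) (hL : HasIVT L)
    {H : Subring (K × L)} (hH : Maximal (· ∈ signSubrings K L) H) :
    ∃ (S : Subfield K) (j : S →+* L), HasIVT S ∧ StrictMono j ∧
      ∀ z ∈ H, ∃ h : z.1 ∈ S, j ⟨z.1, h⟩ = z.2 := by
  set S : Subfield K :=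
    { H.map (RingHom.fst K L) with
      inv_mem' := by
        rintro _ ⟨z, hz, rfl⟩
        by_cases h : z.1 = 0
        · exact ⟨0, H.zero_mem, by simp [h]⟩
        · exact ⟨_, inv_mem_of_maximal_signSubring hH hz h, rfl⟩ } with hS
  have hmemS : ∀ z ∈ H, z.1 ∈ S := fun z hz => ⟨z, hz, rfl⟩
  set φ : H →+* S := ((RingHom.fst K L).comp H.subtype).codRestrict S (fun z => hmemS z z.2)
    with hφ
  have hφinj : Function.Injective φ := by
    rw [injective_iff_map_eq_zero]
    intro z hz
    have h1 : (z : K × L).1 = 0 := congrArg Subtype.val hz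
    have h2 := hH.1 z z.2
    rw [h1, sign_zero, eq_comm, sign_eq_zero_iff] at h2
    exact Subtype.ext (Prod.ext h1 h2)
  have hφsurj : Function.Surjective φ := by
    rintro ⟨_, ⟨z, hz, rfl⟩⟩
    exact ⟨⟨z, hz⟩, rfl⟩
  set e : H ≃+* S := RingEquiv.ofBijective φ ⟨hφinj, hφsurj⟩ with he
  set j : S →+* L := ((RingHom.snd K L).comp H.subtype).comp (e.symm : S →+* H) with hj
  have hje : ∀ z : H, j (e z) = (z : K × L).2 := fun z => by simp [hj]
  have hjmono : StrictMono j := by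
    intro a b hab
    obtain ⟨z, rfl⟩ := e.surjective a
    obtain ⟨w, rfl⟩ := e.surjective b
    rw [hje, hje, ← sub_pos, ← sign_eq_one_iff]
    rw [← sub_pos] at hab
    have := hH.1 (w - z : H) (w - z : H).2
    exact this.symm.trans (sign_pos hab)
  have hclosed := root_mem_range_of_maximal hK hL (i := S.subtype) (fun _ _ h => h) hjmono
    (fun α β h => by
      have hmem : (α, β) ∈ H := mem_of_maximal_signSubring hH _ fun g => by
        have hg := h (g.map (e : H →+* S))
        rw [eval₂_map, eval₂_map] at hg
        rw [fst_eval₂, snd_eval₂]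
        rwa [show j.comp (e : H →+* S) = (RingHom.snd K L).comp H.subtype from
          RingHom.ext hje] at hg
      exact ⟨⟨e ⟨_, hmem⟩, rfl⟩, ⟨e ⟨_, hmem⟩, hje _⟩⟩)
  refine ⟨S, j, fun f a b hab h => ?_, hjmono, fun z hz => ⟨hmemS z hz, hje ⟨z, hz⟩⟩⟩
  have hf : f ≠ 0 := by rintro rfl; simp at h
  have hval : ∀ c : S, eval (S.subtype c) (f.map S.subtype) = (eval c f : S) := fun c => by
    rw [eval_map, eval₂_hom]; rfl
  obtain ⟨c, h1, h2, h3⟩ := hK (f.map S.subtype) (S.subtype a) (S.subtype b) hab (by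
    rw [hval, hval]; exact h)
  obtain ⟨c', rfl⟩ := (hclosed f hf).1 c (by rwa [eval_map] at h3)
  rw [hval] at h3
  exact ⟨c', h1, h2, Subtype.ext h3⟩

/-- Sign patterns remain realisable over the reals after adjoining one element. -/
theorem SignsRealised.exists_extension {ρ : ℝ →+* K} (hK : HasIVT K) {S : Subfield K}
    (hS : HasIVT S) (hρ : ∀ r, ρ r ∈ S) (hSr : SignsRealised ρ S) (t : K) :
    ∃ S' : Subfield K, S ≤ S' ∧ t ∈ S' ∧ HasIVT S' ∧ SignsRealised ρ S' := by
  by_cases ht : t ∈ S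
  · exact ⟨S, le_rfl, ht, hS, hSr⟩
  have hi : StrictMono S.subtype := fun _ _ h => h
  obtain ⟨U, hlo, hup⟩ := exists_ultrafilter_cut hi t
  have hL := hS.germ U
  set j₀ : S →+* Filter.Germ (U : Filter S) S :=
    (Filter.Germ.coeRingHom (U : Filter S)).comp (Pi.constRingHom S S) with hj₀def
  have hj₀ : ∀ c, j₀ c = ((fun _ => c : S → S) : Filter.Germ (U : Filter S) S) := fun _ => rfl
  have hj₀mono : StrictMono j₀ := fun a b hab => by
    rw [hj₀, hj₀, Filter.Germ.coe_lt]
    exact Filter.Eventually.of_forall fun _ => hab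
  set τ : Filter.Germ (U : Filter S) S := ((id : S → S) :) with hτ
  have htS : t ∉ S.subtype.range := by rintro ⟨c, rfl⟩; exact ht c.2
  have hcut : ∀ c, S.subtype c < t → j₀ c < τ := fun c hc => by
    rw [hj₀, hτ, Filter.Germ.coe_lt]; exact hlo c hc
  have hcut' : ∀ c, t < S.subtype c → τ < j₀ c := fun c hc => by
    rw [hj₀, hτ, Filter.Germ.coe_lt]; exact hup c hc
  have hne : ∀ c, S.subtype c ≠ t := fun c h => htS ⟨c, h⟩
  have hτS : τ ∉ j₀.range := by
    rintro ⟨c, hc⟩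
    rcases lt_or_gt_of_ne (hne c) with h | h
    · exact (hcut c h).ne hc
    · exact (hcut' c h).ne' hc
  have hsign : ∀ g : S[X],
      SignType.sign (eval₂ S.subtype t g) = SignType.sign (eval₂ j₀ τ g) := by
    intro g
    by_cases hg : g = 0
    · simp [hg]
    refine sign_eval₂_eq_of_same_cut hK hL hi hj₀mono htS hτS (fun c => ⟨hcut c, fun h => ?_⟩) hg
      (hS.root_mem_range hK hi g hg) (hS.root_mem_range hL hj₀mono g hg)
    rcases lt_or_gt_of_ne (hne c) with h' | h'
    · exact h'
    · exact absurd (hcut' c h') h.not_gt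
  have hH₀ : (eval₂RingHom (S.subtype.prod j₀) (t, τ)).range
      ∈ signSubrings K (Filter.Germ (U : Filter S) S) := by
    rintro _ ⟨g, rfl⟩
    rw [coe_eval₂RingHom, fst_eval₂, snd_eval₂]
    exact hsign g
  obtain ⟨H, hle, hH⟩ := exists_maximal_signSubring hH₀
  obtain ⟨S', j, hS', hj, hHS'⟩ := exists_subfield_of_maximal_signSubring hK hL hH
  have hconst : ∀ c : S, ((c : K), j₀ c) ∈ H := fun c => hle ⟨C c, by simp⟩
  have hSS' : S ≤ S' := fun c hc => (hHS' _ (hconst ⟨c, hc⟩)).1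
  refine ⟨S', hSS', (hHS' _ (hle ⟨X, by simp⟩ : (t, τ) ∈ H)).1, hS',
    hSr.of_embedding hρ (fun r => hSS' (hρ r)) U j hj fun r => ?_⟩
  exact (hHS' _ (hconst ⟨ρ r, hρ r⟩)).2

/-- Sign patterns of real polynomials realised in an ordered extension of the reals with the
intermediate value property are realised over the reals. -/
theorem HasIVT.exists_real_signs (hK : HasIVT K) (ρ : ℝ →+* K) {n : ℕ} (y : Fin n → K)
    (s : Finset (MvPolynomial (Fin n) ℝ)) :
    ∃ x : Fin n → ℝ, ∀ p ∈ s,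
      SignType.sign (MvPolynomial.eval x p) = SignType.sign (MvPolynomial.eval₂ ρ y p) := by
  classical
  have hρ : StrictMono ρ := by
    intro a b hab
    rw [← sub_pos] at hab ⊢
    rw [← map_sub, ← Real.sq_sqrt hab.le, map_pow]
    have : Real.sqrt (b - a) ≠ 0 := (Real.sqrt_pos.2 hab).ne'
    have := (_root_.map_ne_zero ρ).2 this
    positivity
  suffices h : ∀ T : Finset K, ∃ S : Subfield K, (∀ r, ρ r ∈ S) ∧ (∀ t ∈ T, t ∈ S) ∧
      HasIVT S ∧ SignsRealised ρ S by
    obtain ⟨S, -, hT, -, hS⟩ := h (univ.image y)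
    exact hS n y (fun k => hT _ (by simp)) s
  intro T
  induction T using Finset.induction_on with
  | empty =>
    refine ⟨ρ.fieldRange, fun r => ⟨r, rfl⟩, by simp, ?_, ?_⟩
    · intro f a b hab h
      obtain ⟨a, a', rfl⟩ := a
      obtain ⟨b, b', rfl⟩ := b
      set e : ℝ →+* ρ.fieldRange := ρ.rangeRestrictField with he
      have hbij : Function.Bijective e := ρ.rangeRestrictField_bijective
      obtain ⟨g, rfl⟩ := map_surjective e hbij.2 f
      have hemono : StrictMono e := fun _ _ h => hρ h
      have hval : ∀ c, eval (e c) (g.map e) = e (eval c g) := fun c => by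
        rw [eval_map, eval₂_hom]
      change eval (e a') (g.map e) * eval (e b') (g.map e) < 0 at h
      rw [hval, hval, ← map_mul, ← map_zero e, hemono.lt_iff_lt] at h
      obtain ⟨c, h1, h2, h3⟩ := hasIVT_real g a' b' (hρ.lt_iff_lt.1 hab) h
      exact ⟨e c, hemono h1, hemono h2, by rw [hval, h3, map_zero]⟩
    · intro n y hy s
      choose x hx using hy
      refine ⟨x, fun p _ => ?_⟩
      have : y = ρ ∘ x := _root_.funext fun k => (hx k).symm
      rw [this, ← sign_map_of_strictMono hρ, MvPolynomial.eval, MvPolynomial.coe_eval₂Hom,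
        MvPolynomial.eval₂_comp_left, RingHom.comp_id]
  | insert t T _ ih =>
    obtain ⟨S, h1, h2, h3, h4⟩ := ih
    obtain ⟨S', k1, k2, k3, k4⟩ := h4.exists_extension hK h3 h1 t
    refine ⟨S', fun r => k1 (h1 r), fun t' ht' => ?_, k3, k4⟩
    rcases Finset.mem_insert.1 ht' with rfl | h
    · exact k2
    · exact k1 (h2 _ h)

end Extension

end Polynomial

section PrimeCone

variable {A : Type*} [CommRing A]

/-- The subsemiring `P + P * a` generated by `a` over a subsemiring `P` containing all squares. -/
def Subsemiring.adjoinOfSq (P : Subsemiring A) (hP : ∀ a, a ^ 2 ∈ P) (a : A) : Subsemiring A where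
  carrier := {x | ∃ s ∈ P, ∃ t ∈ P, x = s + t * a}
  zero_mem' := ⟨0, P.zero_mem, 0, P.zero_mem, by ring⟩
  one_mem' := ⟨1, P.one_mem, 0, P.zero_mem, by ring⟩
  add_mem' := by
    rintro _ _ ⟨s, hs, t, ht, rfl⟩ ⟨s', hs', t', ht', rfl⟩
    exact ⟨s + s', P.add_mem hs hs', t + t', P.add_mem ht ht', by ring⟩
  mul_mem' := by
    rintro _ _ ⟨s, hs, t, ht, rfl⟩ ⟨s', hs', t', ht', rfl⟩
    exact ⟨s * s' + t * t' * a ^ 2,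
      P.add_mem (P.mul_mem hs hs') (P.mul_mem (P.mul_mem ht ht') (hP a)),
      s * t' + t * s', P.add_mem (P.mul_mem hs ht') (P.mul_mem ht hs'), by ring⟩

/-- The subsemirings that contain all squares and no negated even power of `p`. -/
def properCones (p : A) : Set (Subsemiring A) :=
  {P | (∀ a, a ^ 2 ∈ P) ∧ ∀ k : ℕ, -p ^ (2 * k) ∉ P}

theorem exists_maximal_properCone {p : A} {S : Subsemiring A} (hS : S ∈ properCones p) :
    ∃ P, S ≤ P ∧ Maximal (· ∈ properCones p) P := by
  refine zorn_le_nonempty₀ (properCones p) (fun c hc hchain y hy => ⟨sSup c,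
    ⟨fun a => ?_, fun k hk => ?_⟩, fun _ hz => le_sSup hz⟩) S hS
  · exact le_sSup hy ((hc hy).1 a)
  · obtain ⟨P, hP, hkP⟩ := (Subsemiring.mem_sSup_of_directedOn ⟨y, hy⟩ hchain.directedOn).1 hk
    exact (hc hP).2 k hkP

theorem exists_neg_pow_eq_of_notMem {p : A} {P : Subsemiring A}
    (hP : Maximal (· ∈ properCones p) P) {a : A} (ha : a ∉ P) :
    ∃ k : ℕ, ∃ s ∈ P, ∃ t ∈ P, -p ^ (2 * k) = s + t * a := by
  by_contra! h
  refine ha (hP.2 (y := P.adjoinOfSq hP.1.1 a) ⟨fun b => ?_, ?_⟩ (fun b hb => ?_) ?_)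
  · exact ⟨b ^ 2, hP.1.1 b, 0, P.zero_mem, by ring⟩
  · rintro k ⟨s, hs, t, ht, hst⟩
    exact h k s hs t ht hst
  · exact ⟨b, hb, 0, P.zero_mem, by ring⟩
  · exact ⟨0, P.zero_mem, 1, P.one_mem, by ring⟩

theorem neg_mul_notMem_of_maximal {p : A} {P : Subsemiring A}
    (hP : Maximal (· ∈ properCones p) P) {a b : A} (ha : a ∉ P) (hb : b ∉ P) :
    -(a * b) ∉ P := by
  intro hab
  obtain ⟨k, s, hs, t, ht, h⟩ := exists_neg_pow_eq_of_notMem hP ha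
  obtain ⟨l, s', hs', t', ht', h'⟩ := exists_neg_pow_eq_of_notMem hP hb
  have hpow : ∀ k, p ^ (2 * k) ∈ P := fun k => by
    rw [mul_comm, pow_mul]; exact hP.1.1 _
  refine hP.1.2 (k + l) ?_
  have : -p ^ (2 * (k + l)) = s * s' + p ^ (2 * k) * s' + s * p ^ (2 * l)
      + t * t' * (-(a * b)) := by
    rw [mul_add, pow_add]
    linear_combination (p ^ (2 * l) + s') * h - (t * a) * h'
  rw [this]
  exact P.add_mem (P.add_mem (P.add_mem (P.mul_mem hs hs') (P.mul_mem (hpow k) hs'))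
    (P.mul_mem hs (hpow l))) (P.mul_mem (P.mul_mem ht ht') hab)

theorem mem_or_neg_mem_of_maximal {p : A} {P : Subsemiring A}
    (hP : Maximal (· ∈ properCones p) P) (a : A) : a ∈ P ∨ -a ∈ P := by
  by_contra! h
  refine neg_mul_notMem_of_maximal hP h.1 h.2 ?_
  rw [show -(a * -a) = a ^ 2 by ring]
  exact hP.1.1 a

/-- A subsemiring containing all squares that avoids the negated even powers of `p` extends to a
prime cone whose support does not contain `p`. -/
theorem exists_prime_cone {p : A} {S : Subsemiring A} (hS : S ∈ properCones p) :
    ∃ (P : Subsemiring A) (I : Ideal A), S ≤ P ∧ I.IsPrime ∧ (∀ a, a ^ 2 ∈ P) ∧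
      (∀ a, a ∈ I ↔ a ∈ P ∧ -a ∈ P) ∧ p ∉ I := by
  obtain ⟨P, hSP, hP⟩ := exists_maximal_properCone hS
  let I : Ideal A :=
    { carrier := {a | a ∈ P ∧ -a ∈ P}
      zero_mem' := ⟨P.zero_mem, by rw [neg_zero]; exact P.zero_mem⟩
      add_mem' := fun {a b} ha hb =>
        ⟨P.add_mem ha.1 hb.1, by rw [neg_add]; exact P.add_mem ha.2 hb.2⟩
      smul_mem' := fun c a ha => by
        rcases mem_or_neg_mem_of_maximal hP c with hc | hc
        · exact ⟨P.mul_mem hc ha.1, by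
            rw [smul_eq_mul, ← mul_neg]; exact P.mul_mem hc ha.2⟩
        · exact ⟨by rw [smul_eq_mul, ← neg_mul_neg]; exact P.mul_mem hc ha.2, by
            rw [smul_eq_mul, ← neg_mul]; exact P.mul_mem hc ha.1⟩ }
  have hI : ∀ a, a ∈ I ↔ a ∈ P ∧ -a ∈ P := fun _ => Iff.rfl
  have hpI : p ∉ I := fun h => hP.1.2 1 (by
    rw [show -p ^ (2 * 1) = -p * p by ring]; exact P.mul_mem h.2 h.1)
  refine ⟨P, I, hSP, ⟨fun h => hpI (h ▸ Submodule.mem_top), fun {a b} hab => ?_⟩, hP.1.1, hI, hpI⟩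
  by_contra! h
  have hsplit : ∀ c, c ∉ I → ∃ c', c' ∉ P ∧ (c' = c ∨ c' = -c) := fun c hc => by
    rw [hI, not_and_or] at hc
    rcases hc with hc | hc
    · exact ⟨c, hc, Or.inl rfl⟩
    · exact ⟨-c, hc, Or.inr rfl⟩
  obtain ⟨a', ha', ha⟩ := hsplit a h.1
  obtain ⟨b', hb', hb⟩ := hsplit b h.2
  refine neg_mul_notMem_of_maximal hP ha' hb' ?_
  rcases ha with rfl | rfl <;> rcases hb with rfl | rfl <;>
    simp only [mul_neg, neg_mul, neg_neg, hab.1, hab.2]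

end PrimeCone

namespace Polynomial

section RealClosure

variable {Ω : Type} [Field Ω]

/-- The sums of elements `c * e ^ 2` with `c ∈ Q` and `e ∈ E`. -/
def weightedSquares (Q : Subsemiring Ω) (E : Subfield Ω) : Subsemiring Ω :=
  Submonoid.subsemiringClosure
    { carrier := {x | ∃ c ∈ Q, ∃ e ∈ E, x = c * e ^ 2}
      one_mem' := ⟨1, Q.one_mem, 1, E.one_mem, by ring⟩
      mul_mem' := by
        rintro _ _ ⟨c, hc, e, he, rfl⟩ ⟨c', hc', e', he', rfl⟩
        exact ⟨c * c', Q.mul_mem hc hc', e * e', E.mul_mem he he', by ring⟩ }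

theorem weightedSquares_induction {Q : Subsemiring Ω} {E : Subfield Ω} {p : Ω → Prop}
    (h0 : p 0) (hadd : ∀ x y, p x → p y → p (x + y))
    (hmul : ∀ c ∈ Q, ∀ e ∈ E, p (c * e ^ 2)) {x : Ω} (hx : x ∈ weightedSquares Q E) : p x := by
  rw [weightedSquares, Submonoid.subsemiringClosure_mem] at hx
  induction hx using AddSubmonoid.closure_induction with
  | mem x hx =>
    obtain ⟨c, hc, e, he, rfl⟩ := hx
    exact hmul c hc e he
  | zero => exact h0
  | add x y _ _ hx hy => exact hadd x y hx hy

theorem mul_sq_mem_weightedSquares {Q : Subsemiring Ω} {E : Subfield Ω} {c e : Ω} (hc : c ∈ Q)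
    (he : e ∈ E) : c * e ^ 2 ∈ weightedSquares Q E := by
  rw [weightedSquares, Submonoid.subsemiringClosure_mem]
  exact AddSubmonoid.subset_closure ⟨c, hc, e, he, rfl⟩

theorem sq_mem_weightedSquares (Q : Subsemiring Ω) {E : Subfield Ω} {e : Ω} (he : e ∈ E) :
    e ^ 2 ∈ weightedSquares Q E := by
  simpa using mul_sq_mem_weightedSquares Q.one_mem he

theorem le_weightedSquares (Q : Subsemiring Ω) (E : Subfield Ω) : Q ≤ weightedSquares Q E :=
  fun c hc => by simpa using mul_sq_mem_weightedSquares hc E.one_mem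

theorem weightedSquares_mono (Q : Subsemiring Ω) {E E' : Subfield Ω} (h : E ≤ E') :
    weightedSquares Q E ≤ weightedSquares Q E' := fun _ hx =>
  weightedSquares_induction (Subsemiring.zero_mem _) (fun _ _ => Subsemiring.add_mem _)
    (fun _ hc _ he => mul_sq_mem_weightedSquares hc (h he)) hx

/-- The subfields of `Ω` containing `Q` over which `-1` is not a sum of squares weighted by `Q`. -/
def formallyReal (Q : Subsemiring Ω) : Set (Subfield Ω) :=
  {E | (∀ c ∈ Q, c ∈ E) ∧ -1 ∉ weightedSquares Q E}

theorem exists_maximal_formallyReal {Q : Subsemiring Ω} {E₀ : Subfield Ω}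
    (h₀ : E₀ ∈ formallyReal Q) : ∃ E, E₀ ≤ E ∧ Maximal (· ∈ formallyReal Q) E := by
  refine zorn_le_nonempty₀ (formallyReal Q) (fun c hc hchain y hy => ⟨sSup c,
    ⟨fun a ha => le_sSup hy ((hc hy).1 a ha), fun h => ?_⟩, fun _ hz => le_sSup hz⟩) E₀ h₀
  obtain ⟨E, hE, h⟩ : ∃ E ∈ c, -1 ∈ weightedSquares Q E := by
    refine weightedSquares_induction (p := fun x => ∃ E ∈ c, x ∈ weightedSquares Q E)
      ⟨y, hy, Subsemiring.zero_mem _⟩ ?_ (fun a ha e he => ?_) h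
    · rintro x x' ⟨E, hE, hx⟩ ⟨E', hE', hx'⟩
      obtain ⟨E'', hE'', h1, h2⟩ := hchain.directedOn E hE E' hE'
      exact ⟨E'', hE'', Subsemiring.add_mem _ (weightedSquares_mono Q h1 hx)
        (weightedSquares_mono Q h2 hx')⟩
    · obtain ⟨E, hE, h⟩ := (Subfield.mem_sSup_of_directedOn ⟨y, hy⟩ hchain.directedOn).1 he
      exact ⟨E, hE, mul_sq_mem_weightedSquares ha h⟩
  exact (hc hE).2 h

variable {Q : Subsemiring Ω} {E : Subfield Ω}

theorem exists_adjoin_root {α : Ω} {f : E[X]} (hf : f ≠ 0) (hα : aeval α f = 0) :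
    ∃ E' : Subfield Ω, E ≤ E' ∧ α ∈ E' ∧
      ∀ x ∈ E', ∃ g : E[X], g.degree < f.degree ∧ aeval α g = x := by
  refine ⟨(IntermediateField.adjoin E {α}).toSubfield, fun x hx => ?_,
    IntermediateField.mem_adjoin_simple_self E α, fun x hx => ?_⟩
  · exact (IntermediateField.adjoin E {α}).algebraMap_mem ⟨x, hx⟩
  · have hx' : x ∈ (IntermediateField.adjoin E {α}).toSubalgebra := hx
    rw [IntermediateField.adjoin_simple_toSubalgebra_of_isAlgebraic ⟨f, hf, hα⟩,
      Algebra.adjoin_singleton_eq_range_aeval] at hx'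
    obtain ⟨g, rfl⟩ := hx'
    refine ⟨g % f, EuclideanDomain.mod_lt g hf, ?_⟩
    conv_rhs => rw [← EuclideanDomain.div_add_mod g f]
    simp [hα]

theorem neg_one_mem_of_notMem (hE : Maximal (· ∈ formallyReal Q) E) {E' : Subfield Ω}
    (h : E ≤ E') {α : Ω} (hα : α ∈ E') (hαE : α ∉ E) : -1 ∈ weightedSquares Q E' := by
  by_contra h'
  exact hαE (hE.2 ⟨fun c hc => h (hE.1.1 c hc), h'⟩ h hα)

theorem weightedSquares_le (hE : E ∈ formallyReal Q) {x : Ω} (hx : x ∈ weightedSquares Q E) :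
    x ∈ E :=
  weightedSquares_induction (p := (· ∈ E)) E.zero_mem (fun _ _ => E.add_mem)
    (fun c hc _ he => E.mul_mem (hE.1 c hc) (E.pow_mem he 2)) hx

theorem eq_zero_of_mem_of_neg_mem_weightedSquares (hE : E ∈ formallyReal Q) {x : Ω}
    (hx : x ∈ weightedSquares Q E) (hx' : -x ∈ weightedSquares Q E) : x = 0 := by
  by_contra h
  refine hE.2 ?_
  rw [show (-1 : Ω) = x * -x * x⁻¹ ^ 2 by field_simp]
  exact Subsemiring.mul_mem _ (Subsemiring.mul_mem _ hx hx')
    (sq_mem_weightedSquares Q (E.inv_mem (weightedSquares_le hE hx)))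

theorem sqrt_mem_of_neg_notMem (hE : Maximal (· ∈ formallyReal Q) E) {s : Ω}
    (hs : s ^ 2 ∈ E) (hneg : -s ^ 2 ∉ weightedSquares Q E) : s ∈ E := by
  by_contra hsE
  obtain ⟨E', hEE', hsE', hE'⟩ := exists_adjoin_root (E := E) (α := s)
    (f := X ^ 2 - C ⟨s ^ 2, hs⟩) (X_pow_sub_C_ne_zero two_pos _) (by
      simp [aeval_C]; exact sub_self _)
  have hform : ∀ x ∈ E', ∃ a ∈ E, ∃ b ∈ E, x = a + b * s := by
    intro x hx
    obtain ⟨g, hg, rfl⟩ := hE' x hx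
    rw [degree_X_pow_sub_C two_pos] at hg
    have hg1 : g.degree ≤ 1 := Order.le_of_lt_succ hg
    refine ⟨g.coeff 0, (g.coeff 0).2, g.coeff 1, (g.coeff 1).2, ?_⟩
    conv_lhs => rw [eq_X_add_C_of_degree_le_one hg1]
    simp only [map_add, map_mul, aeval_C, aeval_X]
    exact add_comm _ _
  obtain ⟨p, hp, p', hp', r, hr, h⟩ : ∃ p ∈ weightedSquares Q E, ∃ p' ∈ weightedSquares Q E,
      ∃ r ∈ E, -1 = p + p' * s ^ 2 + r * s := by
    refine weightedSquares_induction (p := fun x => ∃ p ∈ weightedSquares Q E,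
      ∃ p' ∈ weightedSquares Q E, ∃ r ∈ E, x = p + p' * s ^ 2 + r * s)
      ⟨0, Subsemiring.zero_mem _, 0, Subsemiring.zero_mem _, 0, E.zero_mem, by ring⟩ ?_ ?_
      (neg_one_mem_of_notMem hE hEE' hsE' hsE)
    · rintro _ _ ⟨p, hp, p', hp', r, hr, rfl⟩ ⟨q, hq, q', hq', t, ht, rfl⟩
      exact ⟨p + q, Subsemiring.add_mem _ hp hq, p' + q', Subsemiring.add_mem _ hp' hq',
        r + t, E.add_mem hr ht, by ring⟩
    · intro c hc e he
      obtain ⟨a, ha, b, hb, rfl⟩ := hform e he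
      exact ⟨c * a ^ 2, mul_sq_mem_weightedSquares hc ha, c * b ^ 2,
        mul_sq_mem_weightedSquares hc hb, (1 + 1) * (c * a * b),
        E.mul_mem (E.add_mem E.one_mem E.one_mem) (E.mul_mem (E.mul_mem (hE.1.1 c hc) ha) hb),
        by ring⟩
  have hpE := weightedSquares_le hE.1 hp
  have hpE' := weightedSquares_le hE.1 hp'
  have hr0 : r = 0 := by
    by_contra hr0
    refine hsE ?_
    rw [show s = (-1 - p - p' * s ^ 2) * r⁻¹ by rw [h]; field_simp; ring]
    exact E.mul_mem (E.sub_mem (E.sub_mem (E.neg_mem E.one_mem) hpE) (E.mul_mem hpE' hs))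
      (E.inv_mem hr)
  rw [hr0, zero_mul, add_zero] at h
  by_cases hp0 : p' = 0
  · rw [hp0, zero_mul, add_zero] at h
    exact hE.1.2 (h ▸ hp)
  · refine hneg ?_
    rw [show -s ^ 2 = (1 + p) * p' * p'⁻¹ ^ 2 by
      field_simp; linear_combination h]
    exact Subsemiring.mul_mem _ (Subsemiring.mul_mem _
      (Subsemiring.add_mem _ (Subsemiring.one_mem _) hp) hp')
      (sq_mem_weightedSquares Q (E.inv_mem hpE'))

theorem mem_or_neg_mem_weightedSquares [IsAlgClosed Ω] (hE : Maximal (· ∈ formallyReal Q) E)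
    {x : Ω} (hx : x ∈ E) : x ∈ weightedSquares Q E ∨ -x ∈ weightedSquares Q E := by
  by_cases h : -x ∈ weightedSquares Q E
  · exact Or.inr h
  · obtain ⟨s, rfl⟩ := IsAlgClosed.exists_pow_nat_eq x two_pos
    exact Or.inl (sq_mem_weightedSquares Q (sqrt_mem_of_neg_notMem hE hx h))

/-- A maximal formally real subfield has the intermediate value property. -/
theorem hasIVT_of_maximal_formallyReal [IsAlgClosed Ω] (hE : Maximal (· ∈ formallyReal Q) E)
    [LinearOrder E] [IsStrictOrderedRing E]
    (hle : ∀ x : E, 0 ≤ x ↔ (x : Ω) ∈ weightedSquares Q E) : HasIVT E := by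
  suffices h : ∀ (N : ℕ) (f : E[X]), f.natDegree = N → ∀ a b, a < b →
      f.eval a * f.eval b < 0 → ∃ c, a ≤ c ∧ c ≤ b ∧ f.eval c = 0 by
    intro f a b hab hf
    obtain ⟨c, h1, h2, h3⟩ := h _ f rfl a b hab hf
    refine ⟨c, lt_of_le_of_ne h1 ?_, lt_of_le_of_ne h2 ?_, h3⟩
    · rintro rfl; simp [h3] at hf
    · rintro rfl; simp [h3] at hf
  intro N
  induction N using Nat.strong_induction_on with
  | _ N ih =>
  intro f hN a b hab hf
  by_contra! hroot
  have hf0 : f ≠ 0 := by rintro rfl; simp at hf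
  have hdeg : f.natDegree ≠ 0 := by
    intro h
    rw [eq_C_of_natDegree_eq_zero h, eval_C, eval_C] at hf
    exact absurd hf (mul_self_nonneg _).not_gt
  have hirr : Irreducible f := by
    by_contra hred
    obtain ⟨g, h, hgh, hg, hh⟩ : ∃ g h : E[X], f = g * h ∧ g.natDegree < N ∧ h.natDegree < N := by
      rw [irreducible_iff, not_and_or] at hred
      rcases hred with hu | hred
      · rw [not_not] at hu
        exact absurd (natDegree_eq_zero_of_isUnit hu) hdeg
      · push Not at hred
        obtain ⟨g, h, hgh, hg, hh⟩ := hred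
        have hg0 : g ≠ 0 := by rintro rfl; simp [hf0] at hgh
        have hh0 : h ≠ 0 := by rintro rfl; simp [hf0] at hgh
        have hd : f.natDegree = g.natDegree + h.natDegree := by
          rw [hgh, natDegree_mul hg0 hh0]
        have h1 : g.natDegree ≠ 0 := fun h' => hg (by
          rw [eq_C_of_natDegree_eq_zero h'] at hg0 ⊢
          exact isUnit_C.2 (isUnit_iff_ne_zero.2 (by simpa using hg0)))
        have h2 : h.natDegree ≠ 0 := fun h' => hh (by
          rw [eq_C_of_natDegree_eq_zero h'] at hh0 ⊢
          exact isUnit_C.2 (isUnit_iff_ne_zero.2 (by simpa using hh0)))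
        exact ⟨g, h, hgh, by omega, by omega⟩
    have : (g.eval a * g.eval b) * (h.eval a * h.eval b) < 0 := by
      rw [hgh, eval_mul, eval_mul] at hf
      linarith
    rcases mul_neg_iff.1 this with ⟨_, h'⟩ | ⟨h', _⟩
    · obtain ⟨c, h1, h2, h3⟩ := ih _ hh h rfl a b hab h'
      exact hroot c h1 h2 (by rw [hgh, eval_mul, h3, mul_zero])
    · obtain ⟨c, h1, h2, h3⟩ := ih _ hg g rfl a b hab h'
      exact hroot c h1 h2 (by rw [hgh, eval_mul, h3, zero_mul])
  obtain ⟨α, hα⟩ := IsAlgClosed.exists_aeval_eq_zero Ω f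
    (by rw [degree_eq_natDegree hf0]; exact_mod_cast hdeg)
  by_cases hαE : α ∈ E
  · have hα' : f.eval ⟨α, hαE⟩ = 0 := by
      have : aeval (algebraMap E Ω ⟨α, hαE⟩) f = 0 := hα
      rw [aeval_algebraMap_apply, _root_.map_eq_zero] at this
      simpa using this
    obtain ⟨u, hu⟩ := ((dvd_iff_isRoot.2 hα') : X - C _ ∣ f)
    have huu := (hirr.isUnit_or_isUnit hu).resolve_left (not_isUnit_X_sub_C _)
    obtain ⟨d, -, hd⟩ := Polynomial.isUnit_iff.1 huu
    have hprod : (a - ⟨α, hαE⟩) * (b - ⟨α, hαE⟩) * d ^ 2 < 0 := by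
      rw [hu, ← hd] at hf
      simp only [eval_mul, eval_sub, eval_X, eval_C] at hf
      linarith
    have h1 : (a - ⟨α, hαE⟩) * (b - ⟨α, hαE⟩) < 0 := by
      by_contra! h
      exact absurd hprod (mul_nonneg h (sq_nonneg d)).not_gt
    refine hroot ⟨α, hαE⟩ ?_ ?_ hα'
    · by_contra! h
      exact absurd h1 (mul_pos (sub_pos.2 h) (sub_pos.2 (h.trans hab))).not_gt
    · by_contra! h
      exact absurd h1 (mul_pos_of_neg_of_neg (sub_neg.2 (hab.trans h)) (sub_neg.2 h)).not_gt
  · obtain ⟨E', hEE', hαE', hE'⟩ := exists_adjoin_root hf0 hα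
    obtain ⟨G, hG, hGnn, hGα⟩ : ∃ G : E[X], G.natDegree ≤ 2 * (N - 1) ∧
        (∀ c, 0 ≤ G.eval c) ∧ aeval α G = -1 := by
      refine weightedSquares_induction (p := fun x => ∃ G : E[X], G.natDegree ≤ 2 * (N - 1) ∧
        (∀ c, 0 ≤ G.eval c) ∧ aeval α G = x) ⟨0, by simp, by simp, by simp⟩ ?_ ?_
        (neg_one_mem_of_notMem hE hEE' hαE' hαE)
      · rintro _ _ ⟨G, h1, h2, rfl⟩ ⟨G', h1', h2', rfl⟩
        refine ⟨G + G', natDegree_add_le_of_degree_le h1 h1', fun c => ?_, map_add _ _ _⟩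
        rw [eval_add]
        exact add_nonneg (h2 c) (h2' c)
      · intro c hc e he
        obtain ⟨g, hg, rfl⟩ := hE' e he
        have hg' : g.natDegree ≤ N - 1 := by
          rcases eq_or_ne g 0 with rfl | h
          · simp
          · have := natDegree_lt_natDegree h hg
            omega
        refine ⟨C ⟨c, hE.1.1 c hc⟩ * g ^ 2, ?_, fun x => ?_, ?_⟩
        · exact (natDegree_C_mul_le _ _).trans
            (natDegree_pow_le.trans (Nat.mul_le_mul_left 2 hg'))
        · rw [eval_mul, eval_C, eval_pow]
          exact mul_nonneg ((hle _).2 (le_weightedSquares Q E hc)) (sq_nonneg _)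
        · rw [map_mul, map_pow, aeval_C]
          rfl
    have hdvd : f ∣ 1 + G := by
      by_contra hnd
      obtain ⟨u, v, huv⟩ := (hirr.coprime_iff_not_dvd).2 hnd
      have := congrArg (aeval α) huv
      simp [hα, hGα] at this
    obtain ⟨h, hh⟩ := hdvd
    have hpos : ∀ c, 0 < f.eval c * h.eval c := fun c => by
      rw [← eval_mul, ← hh, eval_add, eval_one]
      exact add_pos_of_pos_of_nonneg one_pos (hGnn c)
    have hh0 : h ≠ 0 := by
      rintro rfl
      simpa using hpos a
    have hhdeg : h.natDegree < N := by
      have h1 : (1 + G).natDegree ≤ 2 * (N - 1) :=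
        natDegree_add_le_of_degree_le (by simp) hG
      rw [hh, natDegree_mul hf0 hh0] at h1
      omega
    have hsign : h.eval a * h.eval b < 0 := by
      by_contra! hnn
      have := mul_pos (hpos a) (hpos b)
      rw [mul_mul_mul_comm] at this
      exact absurd this (mul_nonpos_of_nonpos_of_nonneg hf.le hnn).not_gt
    obtain ⟨c, -, -, hc⟩ := ih _ hhdeg h rfl a b hab hsign
    have := hpos c
    rw [hc, mul_zero] at this
    exact lt_irrefl _ this

/-- A prime cone of a ring is the preimage of the nonnegative elements of an ordered field with
the intermediate value property. -/
theorem exists_hasIVT_field {A : Type} [CommRing A] {P : Subsemiring A} {I : Ideal A}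
    (hI : I.IsPrime) (hsq : ∀ a, a ^ 2 ∈ P) (hPI : ∀ a, a ∈ I ↔ a ∈ P ∧ -a ∈ P) :
    ∃ (K : Type) (_ : Field K) (_ : LinearOrder K) (_ : IsStrictOrderedRing K) (φ : A →+* K),
      HasIVT K ∧ (∀ a ∈ P, 0 ≤ φ a) ∧ ∀ a, φ a = 0 → a ∈ I := by
  classical
  let F := FractionRing (A ⧸ I)
  let Ω := AlgebraicClosure F
  let ψ : A →+* F := (algebraMap (A ⧸ I) F).comp (Ideal.Quotient.mk I)
  let φ : A →+* Ω := (algebraMap F Ω).comp ψ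
  have hφ : ∀ a, φ a = 0 ↔ a ∈ I := fun a => by
    rw [show φ a = algebraMap F Ω (algebraMap (A ⧸ I) F (Ideal.Quotient.mk I a)) from rfl,
      _root_.map_eq_zero, FaithfulSMul.algebraMap_eq_zero_iff, Ideal.Quotient.eq_zero_iff_mem]
  let Q : Subsemiring Ω := P.map φ
  have hfrac : ∀ x ∈ (algebraMap F Ω).fieldRange, ∃ a s, s ∉ I ∧ x * φ s = φ a := by
    rintro _ ⟨x, rfl⟩
    obtain ⟨a, s, hs, rfl⟩ := IsFractionRing.div_surjective (A := A ⧸ I) x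
    obtain ⟨a, rfl⟩ := Ideal.Quotient.mk_surjective a
    obtain ⟨s, rfl⟩ := Ideal.Quotient.mk_surjective s
    have hs' : s ∉ I := fun h =>
      nonZeroDivisors.ne_zero hs (Ideal.Quotient.eq_zero_iff_mem.2 h)
    refine ⟨a, s, hs', ?_⟩
    rw [map_div₀]
    exact div_mul_cancel₀ _ (fun h => hs' ((hφ s).1 h))
  have hE₀ : (algebraMap F Ω).fieldRange ∈ formallyReal Q := by
    refine ⟨?_, fun h => ?_⟩
    · rintro _ ⟨a, -, rfl⟩
      exact ⟨ψ a, rfl⟩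
    · obtain ⟨s, hs, q, hq, hsq'⟩ : ∃ s, s ∉ I ∧ ∃ q ∈ P, -1 * φ s ^ 2 = φ q := by
        refine weightedSquares_induction (p := fun x => ∃ s, s ∉ I ∧ ∃ q ∈ P, x * φ s ^ 2 = φ q)
          ⟨1, fun h => hI.ne_top ((Ideal.eq_top_iff_one I).2 h), 0, P.zero_mem, by simp⟩ ?_ ?_ h
        · rintro x y ⟨s, hs, q, hq, h⟩ ⟨s', hs', q', hq', h'⟩
          refine ⟨s * s', fun h => (hI.mem_or_mem h).elim hs hs', q * s' ^ 2 + q' * s ^ 2,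
            P.add_mem (P.mul_mem hq (hsq _)) (P.mul_mem hq' (hsq _)), ?_⟩
          simp only [map_mul, map_add, map_pow]
          linear_combination φ s' ^ 2 * h + φ s ^ 2 * h'
        · rintro _ ⟨c, hc, rfl⟩ e he
          obtain ⟨a, s, hs, h⟩ := hfrac e he
          refine ⟨s, hs, c * a ^ 2, P.mul_mem hc (hsq a), ?_⟩
          rw [map_mul, map_pow, ← h]
          ring
      have hmem : s ^ 2 + q ∈ I := by
        rw [← hφ, map_add, map_pow, ← hsq']
        ring
      have hneg : -s ^ 2 ∈ P := by
        rw [show -s ^ 2 = -(s ^ 2 + q) + q by ring]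
        exact P.add_mem ((hPI _).1 hmem).2 hq
      exact hs (hI.mem_of_pow_mem 2 ((hPI _).2 ⟨hsq s, hneg⟩))
  obtain ⟨E, hE₀E, hE⟩ := exists_maximal_formallyReal hE₀
  let cone : RingCone E :=
    { (weightedSquares Q E).comap E.subtype with
      eq_zero_of_mem_of_neg_mem' := fun {x} hx hx' =>
        Subtype.ext (eq_zero_of_mem_of_neg_mem_weightedSquares hE.1 hx hx') }
  have : HasMemOrNegMem cone :=
    ⟨fun x => mem_or_neg_mem_weightedSquares hE x.2⟩
  let : LinearOrder E := LinearOrder.mkOfAddGroupCone cone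
  have : IsOrderedRing E := IsOrderedRing.mkOfCone cone
  have : IsStrictOrderedRing E := IsOrderedRing.toIsStrictOrderedRing E
  have hle : ∀ x : E, 0 ≤ x ↔ (x : Ω) ∈ weightedSquares Q E := fun x => by
    have : 0 ≤ x ↔ x - 0 ∈ cone := Iff.rfl
    rw [this, sub_zero]
    exact Iff.rfl
  refine ⟨E, inferInstance, inferInstance, inferInstance,
    φ.codRestrict E fun a => hE₀E ⟨ψ a, rfl⟩, hasIVT_of_maximal_formallyReal hE hle,
    fun a ha => (hle _).2 (le_weightedSquares Q E ⟨a, ha, rfl⟩), fun a ha => ?_⟩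
  exact (hφ a).1 (congrArg Subtype.val ha)

end RealClosure

end Polynomial

section Preorder

variable {n m : ℕ}

theorem IsSOS.zero : IsSOS (0 : MvPolynomial (Fin n) ℝ) := ⟨0, Fin.elim0, by simp⟩

theorem IsSOS.sq (s : MvPolynomial (Fin n) ℝ) : IsSOS (s ^ 2) := ⟨1, fun _ => s, by simp⟩

theorem IsSOS.add {p q : MvPolynomial (Fin n) ℝ} (hp : IsSOS p) (hq : IsSOS q) :
    IsSOS (p + q) := by
  obtain ⟨N, s, rfl⟩ := hp
  obtain ⟨M, t, rfl⟩ := hq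
  exact ⟨N + M, Fin.append s t, by simp [Fin.sum_univ_add]⟩

theorem IsSOS.eval_nonneg {p : MvPolynomial (Fin n) ℝ} (hp : IsSOS p) (x : Fin n → ℝ) :
    0 ≤ eval x p := by
  obtain ⟨N, s, rfl⟩ := hp
  rw [map_sum]
  exact Finset.sum_nonneg fun i _ => by rw [map_pow]; exact sq_nonneg _

theorem InPreorder.eval_nonneg {b : Fin m → MvPolynomial (Fin n) ℝ} {p : MvPolynomial (Fin n) ℝ}
    (hp : InPreorder b p) {x : Fin n → ℝ} (hx : ∀ i, 0 ≤ eval x (b i)) : 0 ≤ eval x p := by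
  obtain ⟨σ, hσ, rfl⟩ := hp
  rw [map_sum]
  refine Finset.sum_nonneg fun J _ => ?_
  rw [map_mul, map_prod]
  exact mul_nonneg ((hσ J).eval_nonneg x) (Finset.prod_nonneg fun i _ => hx i)

/-- The preorder generated by `b`, as a subsemiring. -/
noncomputable def preorderSubsemiring (b : Fin m → MvPolynomial (Fin n) ℝ) :
    Subsemiring (MvPolynomial (Fin n) ℝ) :=
  Submonoid.subsemiringClosure
    { carrier := {p | ∃ (s : MvPolynomial (Fin n) ℝ) (J : Finset (Fin m)),
        p = s ^ 2 * ∏ i ∈ J, b i}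
      one_mem' := ⟨1, ∅, by simp⟩
      mul_mem' := by
        rintro _ _ ⟨s, J, rfl⟩ ⟨t, J', rfl⟩
        refine ⟨s * t * ∏ i ∈ J ∩ J', b i, (J ∪ J') \ (J ∩ J'), ?_⟩
        have h1 := Finset.prod_union_inter (s₁ := J) (s₂ := J') (f := b)
        have h2 := Finset.prod_sdiff
          (Finset.inter_subset_union : J ∩ J' ⊆ J ∪ J') (f := b)
        linear_combination -s ^ 2 * t ^ 2 * h1 - s ^ 2 * t ^ 2 * (∏ i ∈ J ∩ J', b i) * h2 }

theorem sq_mem_preorderSubsemiring (b : Fin m → MvPolynomial (Fin n) ℝ)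
    (s : MvPolynomial (Fin n) ℝ) : s ^ 2 ∈ preorderSubsemiring b := by
  rw [preorderSubsemiring, Submonoid.subsemiringClosure_mem]
  exact AddSubmonoid.subset_closure ⟨s, ∅, by simp⟩

theorem mem_preorderSubsemiring (b : Fin m → MvPolynomial (Fin n) ℝ) (i : Fin m) :
    b i ∈ preorderSubsemiring b := by
  rw [preorderSubsemiring, Submonoid.subsemiringClosure_mem]
  exact AddSubmonoid.subset_closure ⟨1, {i}, by simp⟩

theorem inPreorder_of_mem_preorderSubsemiring {b : Fin m → MvPolynomial (Fin n) ℝ}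
    {p : MvPolynomial (Fin n) ℝ} (hp : p ∈ preorderSubsemiring b) : InPreorder b p := by
  rw [preorderSubsemiring, Submonoid.subsemiringClosure_mem] at hp
  induction hp using AddSubmonoid.closure_induction with
  | mem p hp =>
    obtain ⟨s, J, rfl⟩ := hp
    refine ⟨fun J' => if J' = J then s ^ 2 else 0, fun J' => ?_, by simp⟩
    dsimp only
    split_ifs
    exacts [.sq s, .zero]
  | zero => exact ⟨fun _ => 0, fun _ => .zero, by simp⟩
  | add p q _ _ hp hq =>
    obtain ⟨σ, hσ, rfl⟩ := hp
    obtain ⟨τ, hτ, rfl⟩ := hq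
    exact ⟨fun J => σ J + τ J, fun J => (hσ J).add (hτ J), by
      simp only [add_mul, Finset.sum_add_distrib]⟩

/-- The **Positivstellensatz**: if `p` is nonnegative wherever all `b i` are nonnegative, then
this is certified by an identity `q * p = p ^ (2 * k) + r` with `q`, `r` in the preorder
generated by `b`. -/
theorem exists_preorder_certificate {b : Fin m → MvPolynomial (Fin n) ℝ}
    {p : MvPolynomial (Fin n) ℝ}
    (h : ∀ x : Fin n → ℝ, (∀ i, 0 ≤ eval x (b i)) → 0 ≤ eval x p) :
    ∃ (k : ℕ) (q r : MvPolynomial (Fin n) ℝ),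
      InPreorder b q ∧ InPreorder b r ∧ q * p = p ^ (2 * k) + r := by
  classical
  by_contra! hcert
  have hsq := sq_mem_preorderSubsemiring b
  have hS : (preorderSubsemiring b).adjoinOfSq hsq (-p) ∈ properCones p := by
    refine ⟨fun a => ⟨a ^ 2, hsq a, 0, Subsemiring.zero_mem _, by ring⟩, ?_⟩
    rintro k ⟨r, hr, q, hq, hk⟩
    exact hcert k q r (inPreorder_of_mem_preorderSubsemiring hq)
      (inPreorder_of_mem_preorderSubsemiring hr) (by linear_combination hk)
  obtain ⟨P, I, hSP, hI, hPsq, hPI, hpI⟩ := exists_prime_cone hS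
  obtain ⟨K, _, _, _, φ, hK, hφP, hφI⟩ := Polynomial.exists_hasIVT_field hI hPsq hPI
  obtain ⟨x, hx⟩ := hK.exists_real_signs (φ.comp C) (fun i => φ (X i)) (insert p (univ.image b))
  have hφ : ∀ a, eval₂ (φ.comp C) (fun i => φ (X i)) a = φ a := fun a => by
    conv_rhs => rw [← eval₂_eta a]
    rw [eval₂_comp_left]
    rfl
  simp only [hφ] at hx
  have hb : ∀ i, 0 ≤ eval x (b i) := fun i => by
    rw [← sign_nonneg_iff, hx _ (by simp), sign_nonneg_iff]
    exact hφP _ (hSP ⟨b i, mem_preorderSubsemiring b i, 0, Subsemiring.zero_mem _, by ring⟩)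
  have hp : 0 ≤ φ p := by
    rw [← sign_nonneg_iff, ← hx p (by simp), sign_nonneg_iff]
    exact h x hb
  have hp' : 0 ≤ φ (-p) :=
    hφP _ (hSP ⟨0, Subsemiring.zero_mem _, 1, Subsemiring.one_mem _, by ring⟩)
  rw [map_neg, Left.nonneg_neg_iff] at hp'
  exact hpI (hφI p (le_antisymm hp' hp))

end Preorder

section ControlLyapunov

variable {n nu m : ℕ} (V : MvPolynomial (Fin n) ℝ) (f : Fin n → MvPolynomial (Fin n) ℝ)
  (g : Fin n → Fin nu → MvPolynomial (Fin n) ℝ)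

theorem VdotFun_combo (x : Fin n → ℝ) {u v : Fin nu → ℝ} {s t : ℝ} (hst : s + t = 1) :
    VdotFun V f g x (s • u + t • v) = s * VdotFun V f g x u + t * VdotFun V f g x v := by
  simp only [VdotFun, VdotPoly, map_sum, map_mul, map_add, eval_C, Finset.mul_sum,
    ← Finset.sum_add_distrib, Pi.add_apply, Pi.smul_apply, smul_eq_mul]
  refine Finset.sum_congr rfl fun i _ => ?_
  have hsum : ∑ j, (s * u j + t * v j) * eval x (g i j)
      = s * ∑ j, u j * eval x (g i j) + t * ∑ j, v j * eval x (g i j) := by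
    rw [Finset.mul_sum, Finset.mul_sum, ← Finset.sum_add_distrib]
    exact Finset.sum_congr rfl fun j _ => by ring
  rw [hsum]
  linear_combination -(eval x (pderiv i V) * eval x (f i)) * hst

/-- A lower bound on `V̇(x, ·)` at the vertices extends to their convex hull. -/
theorem le_VdotFun_of_mem_convexHull {uvert : Fin m → Fin nu → ℝ} {x : Fin n → ℝ} {c : ℝ}
    (h : ∀ i, c ≤ VdotFun V f g x (uvert i)) {u : Fin nu → ℝ}
    (hu : u ∈ convexHull ℝ (Set.range uvert)) : c ≤ VdotFun V f g x u := by
  refine convexHull_min (t := {u | c ≤ VdotFun V f g x u}) ?_ ?_ hu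
  · rintro _ ⟨i, rfl⟩
    exact h i
  · intro u hu v hv s t hs ht hst
    rw [Set.mem_ofPred_eq, VdotFun_combo V f g x hst]
    calc c = s * c + t * c := by rw [← add_mul, hst, one_mul]
      _ ≤ _ := add_le_add (mul_le_mul_of_nonneg_left hu hs) (mul_le_mul_of_nonneg_left hv ht)

theorem eval_mul_sum_sq_neg_iff (ρ : ℝ) (x : Fin n → ℝ) :
    eval x ((V - C ρ) * ∑ i, (X i : MvPolynomial (Fin n) ℝ) ^ 2) < 0 ↔ eval x V < ρ ∧ x ≠ 0 := by
  have hnn : 0 ≤ ∑ i, x i ^ 2 := Finset.sum_nonneg fun i _ => sq_nonneg (x i)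
  have hpos : 0 < ∑ i, x i ^ 2 ↔ x ≠ 0 := by
    rw [hnn.lt_iff_ne', not_iff_not, Finset.sum_eq_zero_iff_of_nonneg fun i _ => sq_nonneg (x i)]
    simp [_root_.funext_iff]
  simp only [map_mul, map_sub, map_sum, map_pow, eval_C, eval_X]
  rw [← hpos]
  constructor
  · intro h
    rcases mul_neg_iff.1 h with ⟨_, h2⟩ | ⟨h1, h2⟩
    · exact absurd h2 hnn.not_gt
    · exact ⟨sub_neg.1 h1, h2⟩
  · rintro ⟨h1, h2⟩
    exact mul_neg_of_neg_of_pos (sub_neg.2 h1) h2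

end ControlLyapunov

theorem clf_iff_psatz_certificate {n nu m : ℕ}
    (V : MvPolynomial (Fin n) ℝ)
    (f : Fin n → MvPolynomial (Fin n) ℝ) (g : Fin n → Fin nu → MvPolynomial (Fin n) ℝ)
    (uvert : Fin m → Fin nu → ℝ)
    (ε : ℝ) (hε : 0 < ε) (α : ℕ) (hα : 0 < α)
    (hVpos : ∀ x : Fin n → ℝ, eval x V ≥ ε * (∑ i, x i ^ 2) ^ α)
    (hV0 : eval (0 : Fin n → ℝ) V = 0)
    (ρ κV : ℝ) (hρ : 0 < ρ) (hκ : 0 < κV) :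
    (∀ x : Fin n → ℝ, eval x V < ρ → x ≠ 0 →
        ∃ u ∈ convexHull ℝ (Set.range uvert), VdotFun V f g x u < -κV * eval x V)
    ↔ ∃ (k : ℕ) (q r : MvPolynomial (Fin n) ℝ),
        InPreorder (fun i => VdotPoly V f g (uvert i) + C κV * V) q ∧
        InPreorder (fun i => VdotPoly V f g (uvert i) + C κV * V) r ∧
        q * ((V - C ρ) * ∑ i, (X i : MvPolynomial (Fin n) ℝ) ^ 2)
          = ((V - C ρ) * ∑ i, (X i : MvPolynomial (Fin n) ℝ) ^ 2) ^ (2 * k) + r := by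
  have hb : ∀ x i, 0 ≤ eval x (VdotPoly V f g (uvert i) + C κV * V)
      ↔ -κV * eval x V ≤ VdotFun V f g x (uvert i) := fun x i => by
    rw [map_add, map_mul, eval_C, VdotFun, neg_mul, neg_le_iff_add_nonneg]
  constructor
  · intro h
    refine exists_preorder_certificate fun x hx => ?_
    by_contra! hneg
    obtain ⟨hV, hx0⟩ := (eval_mul_sum_sq_neg_iff V ρ x).1 hneg
    obtain ⟨u, hu, hlt⟩ := h x hV hx0
    exact hlt.not_ge (le_VdotFun_of_mem_convexHull V f g (fun i => (hb x i).1 (hx i)) hu)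
  · rintro ⟨k, q, r, hq, hr, hqr⟩ x hV hx0
    have hneg := (eval_mul_sum_sq_neg_iff V ρ x).2 ⟨hV, hx0⟩
    by_contra! hu
    have hx : ∀ i, 0 ≤ eval x (VdotPoly V f g (uvert i) + C κV * V) := fun i =>
      (hb x i).2 (hu _ (subset_convexHull ℝ _ ⟨i, rfl⟩))
    have heval := congrArg (eval x) hqr
    rw [map_mul, map_add, map_pow, mul_comm 2 k, pow_mul] at heval
    have h1 := mul_nonpos_of_nonneg_of_nonpos (hq.eval_nonneg hx) hneg.le
    have h2 : 0 < (eval x ((V - C ρ) * ∑ i, (X i : MvPolynomial (Fin n) ℝ) ^ 2) ^ k) ^ 2 :=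
      sq_pos_of_ne_zero (pow_ne_zero k hneg.ne)
    linarith [hr.eval_nonneg hx]
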